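/- Let k be a real constant. Suppose x, y : ℝ → ℝ are twice differentiable with x(t)² − y(t)² > 0 for all t, and satisfy the Newtonian equations of motion for the potential V(x,y) = k·(x² − y²)^{−2/3}. Then the cubic function J(t) = (x·y' − y·x')·(y'² − x'²) + 4k·(x² − y²)^{−2/3}·(y·x' + x·y') is constant in t. -/

import Mathlib

/-!
A potential depending on `(x, y)` only through `r = x² - y²`, say `W r`, gives the equations of
motion `x'' = -2 W'(r) x` and `y'' = 2 W'(r) y`. The acceleration terms in `(x y)''` then cancel,
leaving `(x y)'' = 2 x' y'`, and the time derivative of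
`J = (x y' - y x') (y'² - x'²) + 4 W(r) (x y)'` collapses to `4 (3 r W'(r) + 2 W(r)) x' y'`.
Hence `J` is conserved as soon as `W` solves the Euler equation `3 r W' + 2 W = 0`, whose solutions
on `r > 0` are the multiples of `r ^ (-2/3)`.
-/

section PartialDerivatives

variable {W : ℝ → ℝ} {a b : ℝ}

theorem deriv_comp_sq_sub_sq_left (hW : DifferentiableAt ℝ W (a ^ 2 - b ^ 2)) :
    deriv (fun c => W (c ^ 2 - b ^ 2)) a = deriv W (a ^ 2 - b ^ 2) * (2 * a) := by
  have hr : HasDerivAt (fun c : ℝ => c ^ 2 - b ^ 2) (2 * a) a := by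
    simpa using (hasDerivAt_pow 2 a).sub_const (b ^ 2)
  exact (hW.hasDerivAt.comp a hr).deriv

theorem deriv_comp_sq_sub_sq_right (hW : DifferentiableAt ℝ W (a ^ 2 - b ^ 2)) :
    deriv (fun c => W (a ^ 2 - c ^ 2)) b = -(deriv W (a ^ 2 - b ^ 2) * (2 * b)) := by
  have hr : HasDerivAt (fun c : ℝ => a ^ 2 - c ^ 2) (-(2 * b)) b := by
    simpa using (hasDerivAt_pow 2 b).const_sub (a ^ 2)
  rw [← mul_neg]
  exact (hW.hasDerivAt.comp b hr).deriv

end PartialDerivatives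

/-- The cubic first integral attached to the potential `W (x² - y²)`, as a function on phase space:
the arguments `x' y'` are the velocities. The factor `y x' + x y'` is the time derivative
of `x y`. -/
def cubicIntegral (W : ℝ → ℝ) (x y x' y' : ℝ) : ℝ :=
  (x * y' - y * x') * (y' ^ 2 - x' ^ 2) + 4 * W (x ^ 2 - y ^ 2) * (y * x' + x * y')

section Motion

variable {W x y x' y' : ℝ → ℝ} {t : ℝ}

theorem hasDerivAt_angularMomentum {ax ay : ℝ}
    (hx : HasDerivAt x (x' t) t) (hy : HasDerivAt y (y' t) t)
    (hx' : HasDerivAt x' ax t) (hy' : HasDerivAt y' ay t) :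
    HasDerivAt (fun s => x s * y' s - y s * x' s) (x t * ay - y t * ax) t := by
  refine ((hx.fun_mul hy').fun_sub (hy.fun_mul hx')).congr_deriv ?_
  ring

theorem hasDerivAt_sq_sub_sq {f g : ℝ → ℝ} {f' g' : ℝ}
    (hf : HasDerivAt f f' t) (hg : HasDerivAt g g' t) :
    HasDerivAt (fun s => f s ^ 2 - g s ^ 2) (2 * (f t * f' - g t * g')) t := by
  refine ((hf.fun_pow 2).fun_sub (hg.fun_pow 2)).congr_deriv ?_
  norm_num
  ring

theorem hasDerivAt_cubicIntegral
    (hW : DifferentiableAt ℝ W (x t ^ 2 - y t ^ 2))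
    (hx : HasDerivAt x (x' t) t) (hy : HasDerivAt y (y' t) t)
    (hx' : HasDerivAt x' (-deriv (fun a => W (a ^ 2 - y t ^ 2)) (x t)) t)
    (hy' : HasDerivAt y' (-deriv (fun b => W (x t ^ 2 - b ^ 2)) (y t)) t) :
    HasDerivAt (fun s => cubicIntegral W (x s) (y s) (x' s) (y' s))
      (4 * (3 * ((x t ^ 2 - y t ^ 2) * deriv W (x t ^ 2 - y t ^ 2)) + 2 * W (x t ^ 2 - y t ^ 2)) *
        (x' t * y' t)) t := by
  rw [deriv_comp_sq_sub_sq_left hW] at hx'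
  rw [deriv_comp_sq_sub_sq_right hW, neg_neg] at hy'
  have hL := hasDerivAt_angularMomentum hx hy hx' hy'
  have hK := hasDerivAt_sq_sub_sq hy' hx'
  have hWr : HasDerivAt (fun s => W (x s ^ 2 - y s ^ 2))
      (deriv W (x t ^ 2 - y t ^ 2) * (2 * (x t * x' t - y t * y' t))) t :=
    hW.hasDerivAt.comp t (hasDerivAt_sq_sub_sq hx hy)
  have hxy : HasDerivAt (fun s => y s * x' s + x s * y' s) (2 * (x' t * y' t)) t := by
    refine ((hy.fun_mul hx').fun_add (hx.fun_mul hy')).congr_deriv ?_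
    ring
  refine ((hL.fun_mul hK).fun_add ((hWr.const_mul 4).fun_mul hxy)).congr_deriv ?_
  ring

end Motion

theorem mul_deriv_const_mul_rpow (k p : ℝ) {r : ℝ} (hr : r ≠ 0) :
    r * deriv (fun s => k * s ^ p) r = p * (k * r ^ p) := by
  rw [((Real.hasDerivAt_rpow_const (Or.inl hr)).const_mul k).deriv, Real.rpow_sub_one hr]
  field_simp

theorem stmt_11_general {I : Set ℝ} (hI : IsOpen I) (hI' : IsPreconnected I)
    {W x y x' y' : ℝ → ℝ}
    (hW : ∀ t ∈ I, DifferentiableAt ℝ W (x t ^ 2 - y t ^ 2))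
    (hEuler : ∀ t ∈ I,
      3 * ((x t ^ 2 - y t ^ 2) * deriv W (x t ^ 2 - y t ^ 2)) + 2 * W (x t ^ 2 - y t ^ 2) = 0)
    (hx : ∀ t ∈ I, HasDerivAt x (x' t) t)
    (hy : ∀ t ∈ I, HasDerivAt y (y' t) t)
    (hx' : ∀ t ∈ I, HasDerivAt x' (-deriv (fun a => W (a ^ 2 - y t ^ 2)) (x t)) t)
    (hy' : ∀ t ∈ I, HasDerivAt y' (-deriv (fun b => W (x t ^ 2 - b ^ 2)) (y t)) t)
    {t₁ t₂ : ℝ} (ht₁ : t₁ ∈ I) (ht₂ : t₂ ∈ I) :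
    cubicIntegral W (x t₁) (y t₁) (x' t₁) (y' t₁) =
      cubicIntegral W (x t₂) (y t₂) (x' t₂) (y' t₂) := by
  have hJ : ∀ t ∈ I, HasDerivAt (fun s => cubicIntegral W (x s) (y s) (x' s) (y' s)) 0 t := by
    intro t ht
    simpa only [hEuler t ht, mul_zero, zero_mul] using
      hasDerivAt_cubicIntegral (hW t ht) (hx t ht) (hy t ht) (hx' t ht) (hy' t ht)
  exact hI.is_const_of_deriv_eq_zero hI'
    (fun t ht => (hJ t ht).differentiableAt.differentiableWithinAt)
    (fun t ht => (hJ t ht).deriv) ht₁ ht₂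

theorem stmt_11 (k : ℝ) (x y x' y' x'' y'' : ℝ → ℝ) (V : ℝ → ℝ → ℝ) (J : ℝ → ℝ)
    (hV : ∀ a b : ℝ, V a b = k * (a ^ 2 - b ^ 2) ^ (-(2 : ℝ) / 3))
    (hx : ∀ t, HasDerivAt x (x' t) t)
    (hy : ∀ t, HasDerivAt y (y' t) t)
    (hx' : ∀ t, HasDerivAt x' (x'' t) t)
    (hy' : ∀ t, HasDerivAt y' (y'' t) t)
    (hpos : ∀ t, 0 < x t ^ 2 - y t ^ 2)
    (heqx : ∀ t, x'' t = - deriv (fun a => V a (y t)) (x t))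
    (heqy : ∀ t, y'' t = - deriv (fun b => V (x t) b) (y t))
    (hJ : ∀ t, J t =
      (x t * y' t - y t * x' t) * (y' t ^ 2 - x' t ^ 2) +
      4 * k * (x t ^ 2 - y t ^ 2) ^ (-(2 : ℝ) / 3) * (y t * x' t + x t * y' t)) :
    ∀ t₁ t₂ : ℝ, J t₁ = J t₂ := by
  intro t₁ t₂
  simp only [hV] at heqx heqy
  simpa only [hJ, cubicIntegral, mul_assoc] using
    stmt_11_general (W := fun r => k * r ^ (-(2 : ℝ) / 3)) isOpen_univ isPreconnected_univ
      (fun t _ => (Real.differentiableAt_rpow_const_of_ne _ (hpos t).ne').const_mul k)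
      (fun t _ => by rw [mul_deriv_const_mul_rpow k _ (hpos t).ne']; ring)
      (fun t _ => hx t) (fun t _ => hy t) (fun t _ => heqx t ▸ hx' t) (fun t _ => heqy t ▸ hy' t)
      (Set.mem_univ t₁) (Set.mem_univ t₂)
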